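/- arXiv:0810.1195 — 2 statements merged into one kernel-verified Lean document; each statement's English description precedes it below -/
import Mathlib

section
/- Let E > 0, θ := 2/E, and H(t,x) := ½(x² − t²). For every Schwartz function f: ℝ² → ℂ and every (t,x) ∈ ℝ², the regularized twisted-convolution limits defining (H ⋆_θ f)(t,x) and (f ⋆_θ H)(t,x) exist, and (H ⋆_θ f)(t,x) = (1/E²)(D²f)(t,x) while (f ⋆_θ H)(t,x) = (1/E²)(D̃²f)(t,x). -/
open MeasureTheory Filter Complex

noncomputable def dT (f : ℝ → ℝ → ℂ) (t x : ℝ) : ℂ := deriv (fun s => f s x) t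

noncomputable def dX (f : ℝ → ℝ → ℂ) (t x : ℝ) : ℂ := deriv (fun s => f t s) x

/-- `D²f = ½[−(∂_t²f − ∂_x²f) − 2iE(x ∂_t f + t ∂_x f) − E²(t² − x²)f]`. -/
noncomputable def D2 (E : ℝ) (f : ℝ → ℝ → ℂ) (t x : ℝ) : ℂ :=
  (1 / 2 : ℂ) *
    (-(dT (dT f) t x - dX (dX f) t x)
      - 2 * Complex.I * (E : ℂ) * ((x : ℂ) * dT f t x + (t : ℂ) * dX f t x)
      - (E : ℂ) ^ 2 * ((t : ℂ) ^ 2 - (x : ℂ) ^ 2) * f t x)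

/-- `D̃²f = ½[−(∂_t²f − ∂_x²f) + 2iE(x ∂_t f + t ∂_x f) − E²(t² − x²)f]`. -/
noncomputable def Dt2 (E : ℝ) (f : ℝ → ℝ → ℂ) (t x : ℝ) : ℂ :=
  (1 / 2 : ℂ) *
    (-(dT (dT f) t x - dX (dX f) t x)
      + 2 * Complex.I * (E : ℂ) * ((x : ℂ) * dT f t x + (t : ℂ) * dX f t x)
      - (E : ℂ) ^ 2 * ((t : ℂ) ^ 2 - (x : ℂ) ^ 2) * f t x)

/-- The `δ`-regularized twisted-convolution integral defining the Moyal star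
product `(f ⋆_θ g)(t,x)` (before taking the limit `δ → 0⁺`). -/
noncomputable def starInt (θ δ : ℝ) (f g : ℝ × ℝ → ℂ) (t x : ℝ) : ℂ :=
  ((1 / (Real.pi ^ 2 * θ ^ 2) : ℝ) : ℂ) *
    ∫ q : (ℝ × ℝ) × (ℝ × ℝ),
      ((Real.exp (-δ * (q.1.1 ^ 2 + q.1.2 ^ 2 + q.2.1 ^ 2 + q.2.2 ^ 2)) : ℝ) : ℂ) *
        f q.1 * g q.2 *
        Complex.exp ((2 * Complex.I / (θ : ℂ)) *
          (((q.1.1 - t : ℝ) : ℂ) * ((q.2.2 - x : ℝ) : ℂ)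
            - ((q.1.2 - x : ℝ) : ℂ) * ((q.2.1 - t : ℝ) : ℂ)))

/-- The classical Hamiltonian `H(t,x) = ½(x² − t²)`. -/
noncomputable def Hfun : ℝ × ℝ → ℂ := fun p => (1 / 2 : ℂ) * ((p.2 : ℂ) ^ 2 - (p.1 : ℂ) ^ 2)

/-!
The oscillating factor of the twisted convolution is the exponential of a symplectic pairing, so
multiplying it by a coordinate of the first variable amounts to differentiating it in the second.
Integration by parts thus turns the factor `H` into a second-order operator `𝓗_δ`, built from
regularized Bopp shifts and acting on `f`: before the limit, `H ⋆ f = 1 ⋆ 𝓗_δ f`. In `1 ⋆ g` the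
integral over the first variable is Gaussian, and what remains is an approximate identity at
`(t, x)`, so the limit is `𝓗_0 f (t, x)`. Swapping the two factors changes the sign of `θ`, which
yields the right product.
-/

open LineDeriv Topology
open scoped SchwartzMap

section ApproximateIdentity

variable {V : Type*} [NormedAddCommGroup V] [NormedSpace ℝ V] [MeasurableSpace V] [BorelSpace V]
  {μ : Measure V}

theorem integral_eq_pow_finrank_smul_integral_comp_add_smul [FiniteDimensional ℝ V]
    [μ.IsAddHaarMeasure] {W : Type*} [NormedAddCommGroup W] [NormedSpace ℝ W]
    (F : V → W) (p : V) {ε : ℝ} (hε : 0 < ε) :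
    ∫ z, F z ∂μ = ε ^ Module.finrank ℝ V • ∫ w, F (p + ε • w) ∂μ := by
  rw [Measure.integral_comp_smul_of_nonneg μ (fun z => F (p + z)) ε (hR := hε.le),
    integral_add_left_eq_self, smul_inv_smul₀ (by positivity)]

theorem tendsto_integral_smul_comp_add_smul [SecondCountableTopology V] {𝕜 W ι : Type*} [RCLike 𝕜]
    [NormedAddCommGroup W] [NormedSpace ℝ W] [CompleteSpace W] [NormedSpace 𝕜 W] {l : Filter ι}
    [l.IsCountablyGenerated] {ρ : V → 𝕜} (hρ : Integrable ρ μ) {F : ι → V → W} {p : V} {L : W}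
    {C : ℝ} {ε : ι → ℝ} (hε : Tendsto ε l (𝓝 0)) (hcont : ∀ i, Continuous (F i))
    (hbound : ∀ᶠ i in l, ∀ z, ‖F i z‖ ≤ C) (hlim : Tendsto ↿F (l ×ˢ 𝓝 p) (𝓝 L)) :
    Tendsto (fun i => ∫ w, ρ w • F i (p + ε i • w) ∂μ) l (𝓝 ((∫ w, ρ w ∂μ) • L)) := by
  rw [← integral_smul_const]
  refine tendsto_integral_filter_of_dominated_convergence (fun w => ‖ρ w‖ * C) ?_ ?_
    (hρ.norm.mul_const C) ?_
  · refine .of_forall fun i => hρ.aestronglyMeasurable.smul ?_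
    exact ((hcont i).comp (by fun_prop)).aestronglyMeasurable
  · filter_upwards [hbound] with i hi
    refine .of_forall fun w => ?_
    rw [norm_smul]
    gcongr
    exact hi _
  · refine .of_forall fun w => Tendsto.const_smul ?_ _
    have hpoint : Tendsto (fun i => p + ε i • w) l (𝓝 p) := by
      simpa using (hε.smul_const w).const_add p
    exact hlim.comp (tendsto_id.prodMk hpoint)

end ApproximateIdentity

section SchwartzFamily

variable {V W X : Type*} [NormedAddCommGroup V] [NormedSpace ℝ V] [NormedAddCommGroup W]
  [NormedSpace ℝ W] [TopologicalSpace X] {G : X → 𝓢(V, W)}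

theorem continuous_uncurry_schwartzMap (hG : Continuous G) : Continuous ↿(fun x z => G x z) := by
  have hbcf : Continuous fun x => SchwartzMap.toBoundedContinuousFunctionCLM ℝ V W (G x) := by
    fun_prop
  exact (hbcf.comp continuous_fst).eval continuous_snd

theorem exists_eventually_norm_schwartzMap_le (hG : Continuous G) (x₀ : X) :
    ∃ C, ∀ᶠ x in 𝓝 x₀, ∀ z, ‖G x z‖ ≤ C := by
  have hbcf : Continuous fun x => ‖SchwartzMap.toBoundedContinuousFunctionCLM ℝ V W (G x)‖ := by
    fun_prop
  refine ⟨‖SchwartzMap.toBoundedContinuousFunctionCLM ℝ V W (G x₀)‖ + 1, ?_⟩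
  filter_upwards [(hbcf.tendsto x₀).eventually_le_const (lt_add_one _)] with x hx z
  exact (BoundedContinuousFunction.norm_coe_le_norm _ z).trans hx

end SchwartzFamily

section Plane

/-- The Euclidean inner product on `ℝ × ℝ`, whose norm in Mathlib is the supremum norm. -/
def euclideanForm (a b : ℝ × ℝ) : ℝ := a.1 * b.1 + a.2 * b.2

/-- The standard symplectic form on the phase space `ℝ × ℝ`; it is the phase of the twisted
convolution and pairs a momentum with a direction of differentiation. -/
def symplecticForm (a b : ℝ × ℝ) : ℝ := a.1 * b.2 - a.2 * b.1

theorem euclideanForm_self_nonneg (a : ℝ × ℝ) : 0 ≤ euclideanForm a a :=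
  add_nonneg (mul_self_nonneg _) (mul_self_nonneg _)

@[fun_prop]
theorem continuous_euclideanForm : Continuous fun q : (ℝ × ℝ) × (ℝ × ℝ) =>
    euclideanForm q.1 q.2 := by
  unfold euclideanForm
  fun_prop

@[fun_prop]
theorem continuous_symplecticForm : Continuous fun q : (ℝ × ℝ) × (ℝ × ℝ) =>
    symplecticForm q.1 q.2 := by
  unfold symplecticForm
  fun_prop

variable {b : ℂ}

theorem integral_cexp_neg_mul_euclideanForm_add (hb : 0 < b.re) (c d : ℂ) :
    ∫ y : ℝ × ℝ, cexp (-b * euclideanForm y y + (c * y.1 + d * y.2)) =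
      Real.pi / b * cexp ((c ^ 2 + d ^ 2) / (4 * b)) := by
  have hquad (c : ℂ) : ∫ s : ℝ, cexp (-b * s ^ 2 + c * s + 0) =
      (Real.pi / b) ^ (1 / 2 : ℂ) * cexp (c ^ 2 / (4 * b)) := by
    rw [integral_cexp_quadratic (by simpa using hb)]
    simp [neg_div', div_neg]
  calc
    _ = ∫ y : ℝ × ℝ, cexp (-b * y.1 ^ 2 + c * y.1 + 0) * cexp (-b * y.2 ^ 2 + d * y.2 + 0) := by
      congr with y
      simp only [← Complex.exp_add, euclideanForm]
      push_cast
      ring_nf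
    _ = (∫ s : ℝ, cexp (-b * s ^ 2 + c * s + 0)) * ∫ s : ℝ, cexp (-b * s ^ 2 + d * s + 0) :=
      integral_prod_mul (μ := (volume : Measure ℝ)) (ν := (volume : Measure ℝ))
        (fun s : ℝ => cexp (-b * s ^ 2 + c * s + 0)) fun s : ℝ => cexp (-b * s ^ 2 + d * s + 0)
    _ = ((Real.pi / b : ℂ) ^ (1 / 2 : ℂ)) ^ 2 *
        (cexp (c ^ 2 / (4 * b)) * cexp (d ^ 2 / (4 * b))) := by
      rw [hquad, hquad]
      ring
    _ = _ := by
      rw [← Complex.exp_add, ← add_div, one_div, ← Nat.cast_ofNat (R := ℂ) (n := 2),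
        Complex.cpow_nat_inv_pow _ two_ne_zero]

variable {δ : ℝ}

theorem exp_neg_mul_euclideanForm_self (y : ℝ × ℝ) :
    Real.exp (-δ * euclideanForm y y) = Real.exp (-δ * y.1 ^ 2) * Real.exp (-δ * y.2 ^ 2) := by
  rw [← Real.exp_add, euclideanForm]
  ring_nf

theorem integrable_exp_neg_mul_euclideanForm (hδ : 0 < δ) :
    Integrable fun y : ℝ × ℝ => (Real.exp (-δ * euclideanForm y y) : ℂ) := by
  simp only [exp_neg_mul_euclideanForm_self]
  exact ((integrable_exp_neg_mul_sq hδ).mul_prod (integrable_exp_neg_mul_sq hδ)).ofReal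

theorem integral_exp_neg_mul_euclideanForm (hδ : 0 < δ) :
    ∫ y : ℝ × ℝ, (Real.exp (-δ * euclideanForm y y) : ℂ) = Real.pi / δ := by
  simpa using integral_cexp_neg_mul_euclideanForm_add (b := δ) (by simpa using hδ) 0 0

theorem integrable_Hfun_mul_exp_neg_mul_euclideanForm (hδ : 0 < δ) :
    Integrable fun y : ℝ × ℝ => Hfun y * Real.exp (-δ * euclideanForm y y) := by
  have hgauss : Integrable fun s : ℝ => Real.exp (-δ * s ^ 2) := integrable_exp_neg_mul_sq hδ
  have hmoment : Integrable fun s : ℝ => s ^ 2 * Real.exp (-δ * s ^ 2) := by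
    simpa using integrable_rpow_mul_exp_neg_mul_sq hδ (s := 2) (by norm_num)
  refine (((hgauss.mul_prod hmoment).sub (hmoment.mul_prod hgauss)).ofReal.const_mul
    (1 / 2 : ℂ)).congr (.of_forall fun y => ?_)
  simp only [Pi.sub_apply, RCLike.ofReal_eq_complex_ofReal, Hfun, exp_neg_mul_euclideanForm_self]
  push_cast
  ring

end Plane

section StarKernel

/-- The kernel of the regularized twisted convolution at the point `p`: the Gaussian regulator
times the oscillating phase. -/
noncomputable def starKernel (θ δ : ℝ) (p y z : ℝ × ℝ) : ℂ :=
  cexp (-δ * (euclideanForm y y + euclideanForm z z) + 2 * I / θ * symplecticForm (y - p) (z - p))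

variable (θ δ : ℝ) (p y z v : ℝ × ℝ)

theorem starInt_eq_integral_starKernel (f g : ℝ × ℝ → ℂ) :
    starInt θ δ f g p.1 p.2 = 1 / (Real.pi ^ 2 * θ ^ 2) *
      ∫ q : (ℝ × ℝ) × (ℝ × ℝ), f q.1 * g q.2 * starKernel θ δ p q.1 q.2 := by
  simp only [starInt, starKernel, euclideanForm, symplecticForm, Complex.exp_add,
    Complex.ofReal_exp, Prod.fst_sub, Prod.snd_sub]
  push_cast
  congr with q
  ring_nf

theorem norm_starKernel :
    ‖starKernel θ δ p y z‖ =
      Real.exp (-δ * euclideanForm y y) * Real.exp (-δ * euclideanForm z z) := by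
  rw [starKernel, Complex.norm_exp, ← Real.exp_add, ← mul_add]
  congr 1
  have hphase : 2 * I / θ * symplecticForm (y - p) (z - p) =
      ((2 / θ * symplecticForm (y - p) (z - p) : ℝ) : ℂ) * I := by
    push_cast
    ring
  rw [hphase, ← Complex.ofReal_add, ← Complex.ofReal_neg, ← Complex.ofReal_mul, Complex.add_re,
    Complex.re_ofReal_mul, Complex.ofReal_re, I_re, mul_zero, add_zero]

@[fun_prop]
theorem continuous_starKernel {X : Type*} [TopologicalSpace X] {δ : X → ℝ} {y z : X → ℝ × ℝ}
    (hδ : Continuous δ) (hy : Continuous y) (hz : Continuous z) :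
    Continuous fun i => starKernel θ (δ i) p (y i) (z i) := by
  unfold starKernel
  fun_prop

theorem hasLineDerivAt_starKernel :
    HasLineDerivAt ℝ (starKernel θ δ p y)
      ((-(2 * δ) * euclideanForm z v + 2 * I / θ * symplecticForm (y - p) v) *
        starKernel θ δ p y z) z v := by
  have hexpand : (fun s : ℝ => starKernel θ δ p y (z + s • v)) = fun s : ℝ =>
      cexp ((-δ * (euclideanForm y y + euclideanForm z z) +
          2 * I / θ * symplecticForm (y - p) (z - p)) +
        (-(2 * δ) * euclideanForm z v + 2 * I / θ * symplecticForm (y - p) v) * s +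
        -δ * euclideanForm v v * s ^ 2) := by
    funext s
    simp only [starKernel, euclideanForm, symplecticForm, Prod.fst_add, Prod.snd_add,
      Prod.smul_fst, Prod.smul_snd, Prod.fst_sub, Prod.snd_sub, smul_eq_mul]
    push_cast
    ring_nf
  have hid : HasDerivAt (fun s : ℝ => (s : ℂ)) 1 0 := ofRealCLM.hasDerivAt
  rw [HasLineDerivAt, hexpand]
  refine (((hid.const_mul _).const_add _).add ((hid.pow 2).const_mul _)).cexp.congr_deriv ?_
  simp [starKernel, mul_comm]

variable {θ δ p y z}

theorem norm_starKernel_le_one (hδ : 0 ≤ δ) : ‖starKernel θ δ p y z‖ ≤ 1 := by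
  rw [norm_starKernel, neg_mul, neg_mul]
  have hy := mul_nonneg hδ (euclideanForm_self_nonneg y)
  have hz := mul_nonneg hδ (euclideanForm_self_nonneg z)
  exact mul_le_one₀ (Real.exp_le_one_iff.2 (neg_nonpos.2 hy)) (Real.exp_nonneg _)
    (Real.exp_le_one_iff.2 (neg_nonpos.2 hz))

theorem integrable_mul_starKernel {g : ℝ × ℝ → ℂ} (hg : Integrable g) (hδ : 0 ≤ δ) :
    Integrable fun z => g z * starKernel θ δ p y z :=
  hg.mul_bdd (c := 1) (by fun_prop) (.of_forall fun _ => norm_starKernel_le_one hδ)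

theorem integrable_mul_mul_starKernel {h g : ℝ × ℝ → ℂ}
    (hh : Integrable fun y => h y * Real.exp (-δ * euclideanForm y y)) (hg : Integrable g)
    (hδ : 0 ≤ δ) :
    Integrable fun q : (ℝ × ℝ) × (ℝ × ℝ) => h q.1 * g q.2 * starKernel θ δ p q.1 q.2 := by
  have hbdd : Integrable fun q : (ℝ × ℝ) × (ℝ × ℝ) =>
      (h q.1 * Real.exp (-δ * euclideanForm q.1 q.1) * g q.2) *
        (Real.exp (δ * euclideanForm q.1 q.1) * starKernel θ δ p q.1 q.2) := by
    refine (hh.mul_prod hg).mul_bdd (c := 1) (by fun_prop) (.of_forall fun q => ?_)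
    rw [norm_mul, norm_starKernel, Complex.norm_real, Real.norm_of_nonneg (Real.exp_nonneg _),
      ← mul_assoc, ← Real.exp_add, neg_mul, add_neg_cancel, Real.exp_zero, one_mul,
      Real.exp_le_one_iff, neg_mul]
    exact neg_nonpos.2 (mul_nonneg hδ (euclideanForm_self_nonneg _))
  refine hbdd.congr (.of_forall fun q => ?_)
  have hcancel : (Real.exp (-δ * euclideanForm q.1 q.1) : ℂ) *
      Real.exp (δ * euclideanForm q.1 q.1) = 1 := by
    rw [← Complex.ofReal_mul, ← Real.exp_add, neg_mul, neg_add_cancel, Real.exp_zero, ofReal_one]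
  linear_combination h q.1 * g q.2 * starKernel θ δ p q.1 q.2 * hcancel

theorem integrable_one_mul_mul_starKernel {g : ℝ × ℝ → ℂ} (hg : Integrable g) (hδ : 0 < δ) :
    Integrable fun q : (ℝ × ℝ) × (ℝ × ℝ) => 1 * g q.2 * starKernel θ δ p q.1 q.2 :=
  integrable_mul_mul_starKernel (h := fun _ => 1)
    (by simpa only [one_mul] using integrable_exp_neg_mul_euclideanForm hδ) hg hδ.le

theorem integral_starKernel (hδ : 0 < δ) :
    ∫ y, starKernel θ δ p y z =
      Real.pi / δ * starKernel θ δ p 0 z *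
        Real.exp (-euclideanForm (z - p) (z - p) / (θ ^ 2 * δ)) := by
  calc
    _ = ∫ y : ℝ × ℝ, starKernel θ δ p 0 z * cexp (-δ * euclideanForm y y +
        (2 * I / θ * (z.2 - p.2) * y.1 + -(2 * I / θ * (z.1 - p.1)) * y.2)) := by
      congr with y
      simp only [starKernel, euclideanForm, symplecticForm, ← Complex.exp_add, Prod.fst_sub,
        Prod.snd_sub, Prod.fst_zero, Prod.snd_zero]
      push_cast
      ring_nf
    _ = _ := by
      rw [integral_const_mul, integral_cexp_neg_mul_euclideanForm_add (by simpa using hδ)]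
      simp only [euclideanForm, Prod.fst_sub, Prod.snd_sub, Complex.ofReal_exp]
      push_cast
      rw [mul_assoc, mul_left_comm]
      congr 3
      field_simp
      grind [I_sq]

end StarKernel

section BoppShift

/-- The regularized Bopp shift: the operator on Schwartz functions to which multiplication by the
coordinate `symplecticForm y v` of the first factor of a star product is transferred on the second
factor. For `δ = 0` it is `symplecticForm p v + (iθ/2) ∂_v`. -/
noncomputable def boppShift (θ δ : ℝ) (p v : ℝ × ℝ) : 𝓢(ℝ × ℝ, ℂ) →L[ℂ] 𝓢(ℝ × ℝ, ℂ) :=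
  (symplecticForm p v : ℂ) • .id ℂ _ + (I * θ / 2) • (lineDerivOpCLM ℂ 𝓢(ℝ × ℝ, ℂ) v -
    (2 * δ : ℂ) • SchwartzMap.smulLeftCLM ℂ fun z : ℝ × ℝ => (euclideanForm z v : ℂ))

variable {θ δ : ℝ} (p v y : ℝ × ℝ) (g : 𝓢(ℝ × ℝ, ℂ))

theorem hasTemperateGrowth_euclideanForm :
    Function.HasTemperateGrowth fun z : ℝ × ℝ => (euclideanForm z v : ℂ) := by
  convert (ofRealCLM.comp (v.1 • .fst ℝ ℝ ℝ + v.2 • .snd ℝ ℝ ℝ)).hasTemperateGrowth with z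
  simp [euclideanForm, mul_comm]

theorem boppShift_apply (z : ℝ × ℝ) :
    boppShift θ δ p v g z = symplecticForm p v * g z +
      I * θ / 2 * (∂_{v} g z - 2 * δ * (euclideanForm z v * g z)) := by
  simp [boppShift, SchwartzMap.smulLeftCLM_apply_apply (hasTemperateGrowth_euclideanForm v)]

theorem boppShift_zero_apply :
    boppShift θ 0 p v g = (symplecticForm p v : ℂ) • g + (I * θ / 2) • ∂_{v} g := by
  simp [boppShift]

theorem continuous_boppShift_apply {X : Type*} [TopologicalSpace X] {δ : X → ℝ}
    {G : X → 𝓢(ℝ × ℝ, ℂ)} (hδ : Continuous δ) (hG : Continuous G) :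
    Continuous fun i => boppShift θ (δ i) p v (G i) := by
  simp only [boppShift, add_apply, smul_apply, sub_apply]
  fun_prop

theorem symplecticForm_mul_integral_starKernel_eq_integral_boppShift (hθ : θ ≠ 0) (hδ : 0 ≤ δ) :
    symplecticForm y v * ∫ z, g z * starKernel θ δ p y z =
      ∫ z, boppShift θ δ p v g z * starKernel θ δ p y z := by
  have hθ' : (θ : ℂ) ≠ 0 := ofReal_ne_zero.2 hθ
  have hint (h : 𝓢(ℝ × ℝ, ℂ)) : Integrable fun z => h z * starKernel θ δ p y z :=
    integrable_mul_starKernel h.integrable hδ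
  set K' : ℝ × ℝ → ℂ := fun z =>
    (-(2 * δ) * euclideanForm z v + 2 * I / θ * symplecticForm (y - p) v) * starKernel θ δ p y z
  have hK' : (fun z => g z * K' z) = fun z => 2 / (I * θ) *
      (boppShift θ δ p v g z * starKernel θ δ p y z -
        symplecticForm y v * (g z * starKernel θ δ p y z)) - ∂_{v} g z * starKernel θ δ p y z := by
    funext z
    simp only [K', boppShift_apply, symplecticForm, Prod.fst_sub, Prod.snd_sub]
    push_cast
    field_simp
    grind [I_sq]
  have hdiff : Integrable fun z => boppShift θ δ p v g z * starKernel θ δ p y z -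
      symplecticForm y v * (g z * starKernel θ δ p y z) := (hint _).sub ((hint g).const_mul _)
  have hparts : ∫ z, g z * K' z = -∫ z, ∂_{v} g z * starKernel θ δ p y z :=
    integral_bilinear_hasLineDerivAt_right_eq_neg_left_of_integrable
      (B := ContinuousLinearMap.mul ℝ ℂ) (hint (∂_{v} g))
      (hK' ▸ (hdiff.const_mul _).sub (hint _)) (hint g)
      (fun z _ => (g.hasFDerivAt z).hasLineDerivAt v)
      (fun z _ => hasLineDerivAt_starKernel θ δ p y z v)
  rw [hK', integral_sub (hdiff.const_mul _) (hint _), integral_const_mul,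
    integral_sub (hint _) ((hint g).const_mul _), integral_const_mul] at hparts
  have hzero := mul_eq_zero.1 (sub_eq_neg_self.1 hparts)
  exact (sub_eq_zero.1 (hzero.resolve_left (by simp [hθ']))).symm

/-- The Hamiltonian `H(t,x) = ½(x² - t²)` with its coordinates replaced by regularized Bopp shifts:
those along `(1, 0)` and `(0, 1)` stand for `-x` and `t`. -/
noncomputable def boppHamiltonian (θ δ : ℝ) (p : ℝ × ℝ) (g : 𝓢(ℝ × ℝ, ℂ)) : 𝓢(ℝ × ℝ, ℂ) :=
  (1 / 2 : ℂ) • (boppShift θ δ p (1, 0) (boppShift θ δ p (1, 0) g) -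
    boppShift θ δ p (0, 1) (boppShift θ δ p (0, 1) g))

theorem continuous_boppHamiltonian : Continuous fun δ => boppHamiltonian θ δ p g := by
  have hsq (v : ℝ × ℝ) : Continuous fun δ => boppShift θ δ p v (boppShift θ δ p v g) :=
    continuous_boppShift_apply p v continuous_id <|
      continuous_boppShift_apply p v continuous_id continuous_const
  exact ((hsq _).sub (hsq _)).const_smul (1 / 2 : ℂ)

theorem Hfun_mul_integral_starKernel_eq_integral_boppHamiltonian (hθ : θ ≠ 0) (hδ : 0 ≤ δ) :
    Hfun y * ∫ z, g z * starKernel θ δ p y z =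
      ∫ z, boppHamiltonian θ δ p g z * starKernel θ δ p y z := by
  have hint (h : 𝓢(ℝ × ℝ, ℂ)) : Integrable fun z => h z * starKernel θ δ p y z :=
    integrable_mul_starKernel h.integrable hδ
  have hHfun : Hfun y = 1 / 2 * ((symplecticForm y (1, 0) : ℂ) ^ 2 -
      (symplecticForm y (0, 1) : ℂ) ^ 2) := by
    simp [Hfun, symplecticForm]
  simp only [hHfun, boppHamiltonian, smul_apply, sub_apply, smul_eq_mul, mul_assoc, sub_mul,
    pow_two, integral_const_mul, integral_sub (hint _) (hint _),
    symplecticForm_mul_integral_starKernel_eq_integral_boppShift p _ y _ hθ hδ]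

end BoppShift

section StarProduct

variable {θ δ : ℝ}

theorem starInt_Hfun_eq_starInt_one_boppHamiltonian (hθ : θ ≠ 0) (hδ : 0 < δ)
    (g : 𝓢(ℝ × ℝ, ℂ)) (p : ℝ × ℝ) :
    starInt θ δ Hfun g p.1 p.2 = starInt θ δ (fun _ => 1) (boppHamiltonian θ δ p g) p.1 p.2 := by
  rw [starInt_eq_integral_starKernel, starInt_eq_integral_starKernel, Measure.volume_eq_prod,
    integral_prod _ (integrable_mul_mul_starKernel
      (integrable_Hfun_mul_exp_neg_mul_euclideanForm hδ) g.integrable hδ.le),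
    integral_prod _ (integrable_one_mul_mul_starKernel (boppHamiltonian θ δ p g).integrable hδ)]
  simp only [mul_assoc, integral_const_mul, one_mul,
    Hfun_mul_integral_starKernel_eq_integral_boppHamiltonian _ _ _ hθ hδ.le]

theorem starInt_one_eq_integral {g : ℝ × ℝ → ℂ} (hg : Integrable g) (hδ : 0 < δ) (p : ℝ × ℝ) :
    starInt θ δ (fun _ => 1) g p.1 p.2 = 1 / (Real.pi * θ ^ 2) *
      ∫ w : ℝ × ℝ, Real.exp (-(θ ^ 2)⁻¹ * euclideanForm w w) *
        (starKernel θ δ p 0 (p + √δ • w) * g (p + √δ • w)) := by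
  have hδ' : (δ : ℂ) ≠ 0 := ofReal_ne_zero.2 hδ.ne'
  have hscale (w : ℝ × ℝ) :
      -euclideanForm (√δ • w) (√δ • w) / (θ ^ 2 * δ) = -(θ ^ 2)⁻¹ * euclideanForm w w := by
    simp only [euclideanForm, Prod.smul_fst, Prod.smul_snd, smul_eq_mul]
    field_simp
    rw [Real.sq_sqrt hδ.le]
    ring
  rw [starInt_eq_integral_starKernel, Measure.volume_eq_prod,
    integral_prod_symm _ (integrable_one_mul_mul_starKernel hg hδ),
    integral_eq_pow_finrank_smul_integral_comp_add_smul _ p (Real.sqrt_pos.2 hδ)]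
  simp only [Module.finrank_prod, Module.finrank_self, Real.sq_sqrt hδ.le, one_mul,
    integral_const_mul, integral_starKernel hδ, add_sub_cancel_left, hscale]
  rw [Complex.real_smul, ← integral_const_mul, ← integral_const_mul, ← integral_const_mul]
  congr with w
  field_simp

theorem tendsto_starInt_one (hθ : θ ≠ 0) {G : ℝ → 𝓢(ℝ × ℝ, ℂ)} (hG : Continuous G) (p : ℝ × ℝ) :
    Tendsto (fun δ => starInt θ δ (fun _ => 1) (G δ) p.1 p.2) (𝓝[>] 0) (𝓝 (G 0 p)) := by
  have hθ' : 0 < (θ ^ 2)⁻¹ := by positivity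
  set F : ℝ → ℝ × ℝ → ℂ := fun δ z => starKernel θ δ p 0 z * G δ z
  have hcont : Continuous ↿F :=
    (continuous_starKernel θ _ continuous_fst continuous_const continuous_snd).mul
      (continuous_uncurry_schwartzMap hG)
  have hlim : Tendsto ↿F (𝓝[>] 0 ×ˢ 𝓝 p) (𝓝 (G 0 p)) := by
    have hF : F 0 p = G 0 p := by simp [F, starKernel, symplecticForm, mul_comm]
    exact (hcont.tendsto' (0, p) _ hF).mono_left
      ((prod_mono nhdsWithin_le_nhds le_rfl).trans_eq nhds_prod_eq.symm)
  obtain ⟨C, hC⟩ := exists_eventually_norm_schwartzMap_le hG 0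
  have hbound : ∀ᶠ δ in 𝓝[>] 0, ∀ z, ‖F δ z‖ ≤ C := by
    filter_upwards [nhdsWithin_le_nhds hC, self_mem_nhdsWithin] with δ hGδ hδ z
    rw [norm_mul]
    exact (mul_le_of_le_one_left (norm_nonneg _)
      (norm_starKernel_le_one (Set.mem_Ioi.1 hδ).le)).trans (hGδ z)
  have hmass : ∫ w : ℝ × ℝ, (Real.exp (-(θ ^ 2)⁻¹ * euclideanForm w w) : ℂ) =
      Real.pi * θ ^ 2 := by
    simpa using integral_exp_neg_mul_euclideanForm hθ'
  have hmean := (tendsto_integral_smul_comp_add_smul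
    (integrable_exp_neg_mul_euclideanForm hθ')
    (Real.continuous_sqrt.tendsto' 0 0 Real.sqrt_zero |>.mono_left nhdsWithin_le_nhds)
    (fun δ => hcont.uncurry_left δ) hbound hlim).const_mul
      (1 / (Real.pi * θ ^ 2) : ℂ)
  simp only [hmass, smul_eq_mul] at hmean
  rw [← mul_assoc, one_div_mul_cancel (by simp [hθ, Real.pi_ne_zero]), one_mul] at hmean
  refine hmean.congr' ?_
  filter_upwards [self_mem_nhdsWithin] with δ hδ
  exact (starInt_one_eq_integral (G δ).integrable hδ p).symm

theorem tendsto_starInt_Hfun_left (hθ : θ ≠ 0) (g : 𝓢(ℝ × ℝ, ℂ)) (p : ℝ × ℝ) :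
    Tendsto (fun δ => starInt θ δ Hfun g p.1 p.2) (𝓝[>] 0)
      (𝓝 (boppHamiltonian θ 0 p g p)) := by
  refine (tendsto_starInt_one hθ (continuous_boppHamiltonian p g) p).congr' ?_
  filter_upwards [self_mem_nhdsWithin] with δ hδ
  exact (starInt_Hfun_eq_starInt_one_boppHamiltonian hθ hδ g p).symm

theorem starKernel_neg_swap (p y z : ℝ × ℝ) :
    starKernel (-θ) δ p z y = starKernel θ δ p y z := by
  simp only [starKernel, symplecticForm]
  push_cast
  ring_nf

theorem starInt_neg_swap (f g : ℝ × ℝ → ℂ) (p : ℝ × ℝ) :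
    starInt (-θ) δ g f p.1 p.2 = starInt θ δ f g p.1 p.2 := by
  rw [starInt_eq_integral_starKernel, starInt_eq_integral_starKernel, Measure.volume_eq_prod,
    ← integral_prod_swap]
  simp only [Prod.fst_swap, Prod.snd_swap, starKernel_neg_swap, mul_comm (g _), Complex.ofReal_neg,
    neg_sq]

end StarProduct

section KleinGordon

variable (f : 𝓢(ℝ × ℝ, ℂ)) (E t x : ℝ)

theorem dT_schwartzMap : dT (fun a b => f (a, b)) = fun a b => ∂_{((1, 0) : ℝ × ℝ)} f (a, b) := by
  ext a b
  rw [SchwartzMap.lineDerivOp_apply_eq_fderiv]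
  exact ((f.hasFDerivAt (a, b)).comp_hasDerivAt a
    ((hasDerivAt_id a).prodMk (hasDerivAt_const a b))).deriv

theorem dX_schwartzMap : dX (fun a b => f (a, b)) = fun a b => ∂_{((0, 1) : ℝ × ℝ)} f (a, b) := by
  ext a b
  rw [SchwartzMap.lineDerivOp_apply_eq_fderiv]
  exact ((f.hasFDerivAt (a, b)).comp_hasDerivAt b
    ((hasDerivAt_const b a).prodMk (hasDerivAt_id b))).deriv

theorem D2_neg (g : ℝ → ℝ → ℂ) : D2 (-E) g t x = Dt2 E g t x := by
  simp only [D2, Dt2]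
  push_cast
  ring

variable {E}

theorem boppHamiltonian_two_div_eq_D2 (hE : E ≠ 0) :
    boppHamiltonian (2 / E) 0 (t, x) f (t, x) =
      1 / (E : ℂ) ^ 2 * D2 E (fun a b => f (a, b)) t x := by
  have hE' : (E : ℂ) ≠ 0 := ofReal_ne_zero.2 hE
  simp only [boppHamiltonian, boppShift_zero_apply, lineDerivOp_add, lineDerivOp_smul, smul_apply,
    add_apply, sub_apply, smul_eq_mul, D2, dT_schwartzMap, dX_schwartzMap, symplecticForm]
  push_cast
  field_simp
  grind [I_sq]

theorem tendsto_starInt_Hfun_left_D2 (hE : E ≠ 0) :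
    Tendsto (fun δ => starInt (2 / E) δ Hfun f t x) (𝓝[>] 0)
      (𝓝 (1 / (E : ℂ) ^ 2 * D2 E (fun a b => f (a, b)) t x)) := by
  rw [← boppHamiltonian_two_div_eq_D2 f t x hE]
  exact tendsto_starInt_Hfun_left (div_ne_zero two_ne_zero hE) f (t, x)

theorem star_with_H_gives_KleinGordon_general (hE : E ≠ 0) :
    Tendsto (fun δ => starInt (2 / E) δ Hfun f t x) (𝓝[>] 0)
        (𝓝 (1 / (E : ℂ) ^ 2 * D2 E (fun a b => f (a, b)) t x)) ∧
      Tendsto (fun δ => starInt (2 / E) δ f Hfun t x) (𝓝[>] 0)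
        (𝓝 (1 / (E : ℂ) ^ 2 * Dt2 E (fun a b => f (a, b)) t x)) := by
  refine ⟨tendsto_starInt_Hfun_left_D2 f t x hE, ?_⟩
  simpa only [div_neg, starInt_neg_swap (p := (t, x)), D2_neg, Complex.ofReal_neg, neg_sq]
    using tendsto_starInt_Hfun_left_D2 f t x (neg_ne_zero.2 hE)

end KleinGordon

/-- at the self-dual point `θ = 2/E`, the regularized star
products `H ⋆_θ f` and `f ⋆_θ H` exist and equal `(1/E²)D²f` and `(1/E²)D̃²f`
respectively. -/
theorem star_with_H_gives_KleinGordon (E : ℝ) (hE : 0 < E)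
    (f : SchwartzMap (ℝ × ℝ) ℂ) (t x : ℝ) :
    Filter.Tendsto (fun δ : ℝ => starInt (2 / E) δ Hfun (fun p => f p) t x)
        (nhdsWithin (0 : ℝ) (Set.Ioi 0))
        (nhds ((1 / (E : ℂ) ^ 2) * D2 E (fun a b => f (a, b)) t x))
      ∧ Filter.Tendsto (fun δ : ℝ => starInt (2 / E) δ (fun p => f p) Hfun t x)
          (nhdsWithin (0 : ℝ) (Set.Ioi 0))
          (nhds ((1 / (E : ℂ) ^ 2) * Dt2 E (fun a b => f (a, b)) t x)) :=
  star_with_H_gives_KleinGordon_general f t x hE.ne'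
end

section
/- Let E > 0 and θ := 2/E. For all n, m, k, l ∈ ℕ₀ and each fixed sign s ∈ {+,−}, the regularized twisted-convolution star products exist pointwise and satisfy the matrix-unit (projector) relations F^s_{n,m} ⋆_θ F^s_{k,l} = (E/4π) δ_{mk} F^s_{n,l} on ℝ²; equivalently, the rescaled functions (4π/E) F^s_{n,m} satisfy ((4π/E)F^s_{n,m}) ⋆_θ ((4π/E)F^s_{k,l}) = δ_{mk} (4π/E)F^s_{n,l}. -/
open MeasureTheory Filter Complex

/-- The explicit expression `F^±_{m,n}` for `m ≥ n` (sign `s = ±1`). -/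
noncomputable def Fge (E s : ℝ) (m n : ℕ) (t x : ℝ) : ℂ :=
  ((E / (2 * Real.pi) : ℝ) : ℂ) * ((Real.sqrt (m.factorial * n.factorial) : ℝ) : ℂ) *
    Complex.exp (-(s : ℂ) * Complex.I * (E : ℂ) * ((t : ℂ) ^ 2 - (x : ℂ) ^ 2) / 2) *
    (Complex.exp ((s : ℂ) * Complex.I * (Real.pi : ℂ) / 4) * ((Real.sqrt E : ℝ) : ℂ)) ^ (m - n) *
    ((t : ℂ) - (s : ℂ) * (x : ℂ)) ^ (m - n) *
    ∑ p ∈ Finset.range (n + 1),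
      ((s : ℂ) * Complex.I * (E : ℂ) * ((t : ℂ) ^ 2 - (x : ℂ) ^ 2)) ^ (n - p) * (-1 : ℂ) ^ p /
        (((m - p).factorial : ℂ) * ((n - p).factorial : ℂ) * (p.factorial : ℂ))

/-- `F^±_{m,n}` for all `m, n`, with `F^±_{m,n} := conj(F^∓_{n,m})` when `m < n`. -/
noncomputable def Fmn (E s : ℝ) (m n : ℕ) (t x : ℝ) : ℂ :=
  if n ≤ m then Fge E s m n t x else (starRingEnd ℂ) (Fge E (-s) n m t x)

/-!
Up to the factor `(E / 2π) √(m! n!)`, the function `F^s_{m,n}` is the coefficient of `uᵐ vⁿ` in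
`G(u, v) = exp (-siE(t² - x²)/2 + u a + v b - u v)`, where `a, b = e^{siπ/4} √E (t ∓ s x)`; this is
the generating function of the complex Hermite polynomials. Coefficients are extracted by
integrating over the torus `|u| = |v| = 1`, and this commutes with the regularized star product.
The star product of two such exponentials is a Gaussian integral, which can be evaluated in closed
form and is continuous up to `δ = 0`. At `θ = 2 / E` its value there is
`½ exp (v₁ u₂) G(u₁, v₂)`, and the coefficient of `v₁ᵐ u₂ᵏ` in `exp (v₁ u₂)` is `δ_{mk} / m!`.
-/

open scoped Real Topology

local notation "𝕋" => UnitAddCircle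

section ProductMeasure

variable {α β γ δ : Type*} [MeasurableSpace α] [MeasurableSpace β] [MeasurableSpace γ]
  [MeasurableSpace δ]

/-- The rearrangement `((a, b), (c, d)) ↦ ((a, d), (b, c))`, which pairs the outer and the inner
variables of a fourfold integral. -/
def outerInnerEquiv (α β γ δ : Type*) [MeasurableSpace α] [MeasurableSpace β] [MeasurableSpace γ]
    [MeasurableSpace δ] : (α × β) × (γ × δ) ≃ᵐ (α × δ) × (β × γ) where
  toFun q := ((q.1.1, q.2.2), (q.1.2, q.2.1))
  invFun q := ((q.1.1, q.2.1), (q.2.2, q.1.2))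
  measurable_toFun := by dsimp; fun_prop
  measurable_invFun := by dsimp; fun_prop

variable (μ : Measure α) (ν : Measure β) (ρ : Measure γ) (τ : Measure δ)
  [SFinite μ] [SFinite ν] [SFinite ρ] [SFinite τ]

lemma measurePreserving_outerInnerEquiv :
    MeasurePreserving (outerInnerEquiv α β γ δ) ((μ.prod ν).prod (ρ.prod τ))
      ((μ.prod τ).prod (ν.prod ρ)) :=
  have regroup : MeasurePreserving (Prod.swap ∘ MeasurableEquiv.prodAssoc.symm)
      (ν.prod (ρ.prod τ)) (τ.prod (ν.prod ρ)) :=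
    Measure.measurePreserving_swap.comp (measurePreserving_prodAssoc ν ρ τ).symm
  (measurePreserving_prodAssoc μ τ (ν.prod ρ)).symm.comp <|
    ((MeasurePreserving.id μ).prod regroup).comp (measurePreserving_prodAssoc μ ν (ρ.prod τ))

lemma integral_outer_mul_inner {𝕜 : Type*} [RCLike 𝕜] (f : α × δ → 𝕜) (g : β × γ → 𝕜) :
    ∫ q : (α × β) × (γ × δ), f (q.1.1, q.2.2) * g (q.1.2, q.2.1) ∂(μ.prod ν).prod (ρ.prod τ) =
      (∫ p, f p ∂μ.prod τ) * ∫ p, g p ∂ν.prod ρ := by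
  rw [← integral_prod_mul, ← (measurePreserving_outerInnerEquiv μ ν ρ τ).integral_comp']
  rfl

variable {μ ν ρ τ} in
lemma integrable_mul_regroup {𝕜 : Type*} [RCLike 𝕜] {f : α × β → 𝕜} {g : δ × γ → 𝕜}
    (hf : Integrable f (μ.prod ν)) (hg : Integrable g (τ.prod ρ)) :
    Integrable (fun r : (α × δ) × (β × γ) => f (r.1.1, r.2.1) * g (r.1.2, r.2.2))
      ((μ.prod τ).prod (ν.prod ρ)) :=
  (measurePreserving_outerInnerEquiv μ ν ρ τ).symm.integrable_comp_of_integrable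
    (hf.mul_prod hg.swap)

end ProductMeasure

section Gaussian

lemma cpow_mul_cpow_of_re_pos {z w : ℂ} (hz : 0 < z.re) (hw : 0 < w.re) (a : ℂ) :
    z ^ a * w ^ a = (z * w) ^ a := by
  have hz0 : z ≠ 0 := by rintro rfl; simp at hz
  have hw0 : w ≠ 0 := by rintro rfl; simp at hw
  have hz_arg := abs_lt.1 (abs_arg_lt_pi_div_two_iff.2 (.inl hz))
  have hw_arg := abs_lt.1 (abs_arg_lt_pi_div_two_iff.2 (.inl hw))
  rw [cpow_def_of_ne_zero hz0, cpow_def_of_ne_zero hw0, cpow_def_of_ne_zero (mul_ne_zero hz0 hw0),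
    log_mul hz0 hw0 ⟨by linarith, by linarith⟩, add_mul, Complex.exp_add]

lemma re_inv_pos {z : ℂ} (hz : 0 < z.re) : 0 < z⁻¹.re := by
  rw [inv_re]
  exact div_pos hz (normSq_pos.2 fun h => by simp [h] at hz)

/-- The Gaussian `exp (-A t² - B x² + i d t x + J t + K x)` on the plane. -/
noncomputable def planeGaussian (A B : ℂ) (d : ℝ) (J K : ℂ) (p : ℝ × ℝ) : ℂ :=
  cexp (-A * p.1 ^ 2 - B * p.2 ^ 2 + I * d * p.1 * p.2 + J * p.1 + K * p.2)

/-- The critical value `(B J² + i d J K + A K²) / (4 A B + d²)` of the exponent of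
`planeGaussian A B d J K`. -/
noncomputable def quadraticCritValue (A B : ℂ) (d : ℝ) (J K : ℂ) : ℂ :=
  (B * J ^ 2 + I * d * J * K + A * K ^ 2) / (4 * (A * B + d ^ 2 / 4))

variable {A B : ℂ}

lemma integrable_planeGaussian (hA : 0 < A.re) (hB : 0 < B.re) (d : ℝ) (J K : ℂ) :
    Integrable (planeGaussian A B d J K) := by
  have hprod := (integrable_cexp_quadratic hA J 0).mul_prod (integrable_cexp_quadratic hB K 0)
  refine (hprod.bdd_mul (f := fun p : ℝ × ℝ => cexp ((d * p.1 * p.2 : ℝ) * I)) (c := 1)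
    (by fun_prop) (.of_forall fun p => (norm_exp_ofReal_mul_I _).le)).congr (.of_forall fun p => ?_)
  simp only [planeGaussian, ← Complex.exp_add]
  congr 1
  push_cast
  ring

lemma integral_planeGaussian (hA : 0 < A.re) (hB : 0 < B.re) (d : ℝ) (J K : ℂ) :
    ∫ p, planeGaussian A B d J K p =
      (π ^ 2 / (A * B + d ^ 2 / 4)) ^ (1 / 2 : ℂ) * cexp (quadraticCritValue A B d J K) := by
  have hB0 : B ≠ 0 := fun h => by simp [h] at hB
  -- Schur complement of `B` in the quadratic form.
  set C : ℂ := A + d ^ 2 / 4 * B⁻¹ with hC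
  have hC_re : 0 < C.re := by
    have : 0 ≤ (d ^ 2 / 4) * B⁻¹.re := mul_nonneg (by positivity) (re_inv_pos hB).le
    have h : ((d : ℂ) ^ 2 / 4 * B⁻¹).re = (d ^ 2 / 4) * B⁻¹.re := by
      rw [← re_ofReal_mul]; push_cast; rfl
    rw [hC, add_re, h]
    linarith
  have hC0 : C ≠ 0 := fun h => by simp [h] at hC_re
  have hdet : A * B + d ^ 2 / 4 = C * B := by rw [hC]; field_simp
  have inner (t : ℝ) :
      ∫ x : ℝ, planeGaussian A B d J K (t, x) =
        (π / B) ^ (1 / 2 : ℂ) *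
          cexp (-C * t ^ 2 + (J + I * d * K / (2 * B)) * t + K ^ 2 / (4 * B)) := by
    have h := integral_cexp_quadratic (b := -B) (by simpa using hB) (I * d * t + K)
      (-A * t ^ 2 + J * t)
    rw [neg_neg] at h
    convert h using 3
    · rw [planeGaussian]
      congr 1
      ring
    · rw [hC]
      field_simp
      linear_combination (-2 * d ^ 2 * t ^ 2) * I_sq
  have hpi_div {z : ℂ} (hz : 0 < z.re) : 0 < (π / z : ℂ).re := by
    rw [div_eq_mul_inv, re_ofReal_mul]
    exact mul_pos Real.pi_pos (re_inv_pos hz)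
  rw [Measure.volume_eq_prod, integral_prod _ (integrable_planeGaussian hA hB d J K)]
  simp_rw [inner]
  rw [integral_const_mul, integral_cexp_quadratic (by simpa using hC_re), neg_neg, ← mul_assoc,
    cpow_mul_cpow_of_re_pos (hpi_div hB) (hpi_div hC_re), quadraticCritValue, hdet]
  congr 2
  · field_simp
  · field_simp
    linear_combination (-4 * K ^ 2) * hdet + (K ^ 2 * d ^ 2) * I_sq

lemma quadraticCritValue_of_sq_eq {d : ℝ} (hB : B = -A) (hA : A ^ 2 = -(d ^ 2 / 4))
    (J K : ℂ) :
    quadraticCritValue A B d J K = (A * (K ^ 2 - J ^ 2) + I * d * J * K) / (2 * d ^ 2) := by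
  have hdet : 4 * (A * B + d ^ 2 / 4) = 2 * d ^ 2 := by linear_combination 4 * A * hB - 4 * hA
  rw [quadraticCritValue, hdet, hB]
  congr 1
  ring

lemma continuous_quadraticCritValue {X : Type*} [TopologicalSpace X] {A B J K : X → ℂ} {d : ℝ}
    (hA : Continuous A) (hB : Continuous B) (hJ : Continuous J) (hK : Continuous K)
    (hdet : ∀ y, A y * B y + d ^ 2 / 4 ≠ 0) :
    Continuous fun y => quadraticCritValue (A y) (B y) d (J y) (K y) :=
  Continuous.div (by fun_prop) (by fun_prop) fun y => mul_ne_zero (by norm_num) (hdet y)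

end Gaussian

section TorusCoeff

lemma fourier_natCast (n : ℕ) (z : 𝕋) : (fourier n z : ℂ) = fourier 1 z ^ n := by
  simp [fourier_apply, AddCircle.toCircle_nsmul]

lemma norm_fourier_apply (n : ℤ) (z : 𝕋) : ‖(fourier n z : ℂ)‖ = 1 := by
  rw [fourier_apply, Circle.norm_coe]

instance isProbabilityMeasure_unitAddCircle : IsProbabilityMeasure (volume : Measure 𝕋) :=
  ⟨UnitAddCircle.measure_univ⟩

lemma integral_fourier (n : ℤ) : ∫ z : 𝕋, (fourier n z : ℂ) = if n = 0 then 1 else 0 := by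
  split_ifs with h
  · simp [h]
  · exact integral_eq_zero_of_add_right_eq_neg (fourier_add_half_inv_index h one_pos)

lemma integral_fourier_neg_mul_pow (n p : ℕ) :
    ∫ z : 𝕋, (fourier (-n) z * fourier 1 z ^ p : ℂ) = if p = n then 1 else 0 := by
  simp_rw [← fourier_natCast, ← fourier_add, integral_fourier, neg_add_eq_zero, Nat.cast_inj,
    eq_comm]

/-- The character `z ↦ z₁⁻ᵐ z₂⁻ⁿ` of the torus; the circles are written additively. -/
noncomputable def torusChar (m n : ℕ) (z : 𝕋 × 𝕋) : ℂ := fourier (-m) z.1 * fourier (-n) z.2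

lemma continuous_torusChar (m n : ℕ) : Continuous (torusChar m n) := by
  unfold torusChar
  fun_prop

/-- The Fourier coefficient of `H` on the torus `|u| = |v| = 1`, which for an absolutely convergent
power series is the coefficient of `uᵐ vⁿ`. -/
noncomputable def torusCoeff (m n : ℕ) (H : ℂ → ℂ → ℂ) : ℂ :=
  ∫ z : 𝕋 × 𝕋, torusChar m n z * H (fourier 1 z.1) (fourier 1 z.2)

lemma torusCoeff_const_mul (m n : ℕ) (a : ℂ) (H : ℂ → ℂ → ℂ) :
    torusCoeff m n (fun u v => a * H u v) = a * torusCoeff m n H := by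
  simp_rw [torusCoeff, mul_left_comm _ a, integral_const_mul]

lemma integral_torusChar_mul_pow (m n i j : ℕ) :
    ∫ z : 𝕋 × 𝕋, torusChar m n z * ((fourier 1 z.1) ^ i * (fourier 1 z.2) ^ j) =
      if i = m ∧ j = n then 1 else 0 := by
  have split_vars (z : 𝕋 × 𝕋) : torusChar m n z * ((fourier 1 z.1) ^ i * (fourier 1 z.2) ^ j) =
      (fourier (-m) z.1 * fourier 1 z.1 ^ i) * (fourier (-n) z.2 * fourier 1 z.2 ^ j) :=
    mul_mul_mul_comm _ _ _ _
  simp_rw [split_vars]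
  rw [Measure.volume_eq_prod, integral_prod_mul (fun z : 𝕋 => fourier (-m) z * fourier 1 z ^ i)
    (fun z : 𝕋 => fourier (-n) z * fourier 1 z ^ j), integral_fourier_neg_mul_pow,
    integral_fourier_neg_mul_pow, ite_zero_mul_ite_zero, one_mul]

lemma torusCoeff_eq_tsum {ι : Type*} [Countable ι] {c : ι → ℂ} {i j : ι → ℕ}
    {H : ℂ → ℂ → ℂ} (hc : Summable fun k => ‖c k‖)
    (hH : ∀ u v, HasSum (fun k => c k * (u ^ i k * v ^ j k)) (H u v)) (m n : ℕ) :
    torusCoeff m n H = ∑' k, if i k = m ∧ j k = n then c k else 0 := by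
  let F (k : ι) (z : 𝕋 × 𝕋) : ℂ :=
    c k * (torusChar m n z * (fourier 1 z.1 ^ i k * fourier 1 z.2 ^ j k))
  have F_norm (k : ι) (z : 𝕋 × 𝕋) : ‖F k z‖ = ‖c k‖ := by
    simp only [F, torusChar, norm_mul, norm_pow, norm_fourier_apply, one_pow, mul_one]
  have F_integrable (k : ι) : Integrable (F k) := by
    have := continuous_torusChar m n
    exact Continuous.integrable_of_hasCompactSupport (by fun_prop) (.of_compactSpace _)
  have F_integral (k : ι) : ∫ z, F k z = if i k = m ∧ j k = n then c k else 0 := by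
    rw [integral_const_mul, integral_torusChar_mul_pow, mul_ite, mul_one, mul_zero]
  have F_tsum (z : 𝕋 × 𝕋) : ∑' k, F k z = torusChar m n z * H (fourier 1 z.1) (fourier 1 z.2) := by
    simp_rw [F, mul_left_comm (c _) (torusChar m n z)]
    exact ((hH _ _).mul_left _).tsum_eq
  simp_rw [torusCoeff, ← F_tsum, ← F_integral]
  refine (integral_tsum_of_summable_integral_norm F_integrable ?_).symm
  simpa [F_norm] using hc

lemma summable_norm_pow_div_factorial (w : ℂ) : Summable fun k : ℕ => ‖w ^ k / k.factorial‖ := by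
  simpa using Real.summable_pow_div_factorial ‖w‖

lemma hasSum_pow_div_factorial (w : ℂ) : HasSum (fun k : ℕ => w ^ k / k.factorial) (cexp w) := by
  simpa [Complex.exp_eq_exp_ℂ] using NormedSpace.expSeries_div_hasSum_exp w

lemma torusCoeff_exp_mul (m n : ℕ) :
    torusCoeff m n (fun u v => cexp (u * v)) = if m = n then (m.factorial : ℂ)⁻¹ else 0 := by
  rw [torusCoeff_eq_tsum (i := id) (j := id) (summable_norm_pow_div_factorial 1) fun u v => ?_,
    tsum_eq_single m fun k hk => if_neg fun h => hk h.1]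
  · simp
  · simpa [mul_pow, div_eq_inv_mul] using hasSum_pow_div_factorial (u * v)

/-- The complex Hermite polynomial of Itô, normalized by `1 / (m! n!)`. -/
noncomputable def itoHermite (m n : ℕ) (a b : ℂ) : ℂ :=
  ∑ p ∈ Finset.range (min m n + 1), (-1 : ℂ) ^ p * a ^ (m - p) * b ^ (n - p) /
    ((m - p).factorial * (n - p).factorial * p.factorial)

lemma itoHermite_comm (m n : ℕ) (a b : ℂ) : itoHermite m n a b = itoHermite n m b a := by
  unfold itoHermite
  rw [min_comm]
  refine Finset.sum_congr rfl fun p _ => ?_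
  congr 1 <;> ring

lemma conj_itoHermite (m n : ℕ) (a b : ℂ) :
    (starRingEnd ℂ) (itoHermite m n a b) =
      itoHermite m n ((starRingEnd ℂ) a) ((starRingEnd ℂ) b) := by
  simp [itoHermite]

lemma tsum_ite_add_eq_and_add_eq (m n : ℕ) (c : ℕ × ℕ × ℕ → ℂ) :
    (∑' k, if k.1 + k.2.2 = m ∧ k.2.1 + k.2.2 = n then c k else 0) =
      ∑ p ∈ Finset.range (min m n + 1), c (m - p, n - p, p) := by
  have sub_inj : Set.InjOn (fun p => (m - p, n - p, p)) (Finset.range (min m n + 1)) :=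
    fun p _ q _ h => congrArg (fun k : ℕ × ℕ × ℕ => k.2.2) h
  rw [tsum_eq_sum (s := (Finset.range (min m n + 1)).image fun p => (m - p, n - p, p)),
    Finset.sum_image sub_inj]
  · refine Finset.sum_congr rfl fun p hp => if_pos ?_
    have hp := Finset.mem_range.1 hp
    dsimp only
    omega
  · rintro ⟨i, j, p⟩ hk
    refine if_neg fun h => hk (Finset.mem_image.2 ⟨p, ?_⟩)
    dsimp only at h
    rw [Finset.mem_range, Prod.mk.injEq, Prod.mk.injEq]
    exact ⟨by omega, by omega, by omega, rfl⟩

lemma hasSum_mul_mul_of_summable_norm {ι κ ν : Type*} {f : ι → ℂ} {g : κ → ℂ} {h : ν → ℂ}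
    {x y z : ℂ} (hf : HasSum f x) (hg : HasSum g y) (hh : HasSum h z)
    (hf' : Summable fun i => ‖f i‖) (hg' : Summable fun i => ‖g i‖)
    (hh' : Summable fun i => ‖h i‖) :
    HasSum (fun k : ι × κ × ν => f k.1 * (g k.2.1 * h k.2.2)) (x * (y * z)) := by
  have hgh : HasSum (fun k : κ × ν => g k.1 * h k.2) (y * z) :=
    hg.mul hh (summable_mul_of_summable_norm hg' hh')
  have hgh' : Summable fun k : κ × ν => ‖g k.1 * h k.2‖ := hg'.mul_norm hh'
  have hfgh' := summable_mul_of_summable_norm hf' hgh'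
  exact hf.mul (g := fun k : κ × ν => g k.1 * h k.2) hgh hfgh'

lemma torusCoeff_exp_add_sub_mul (m n : ℕ) (a b : ℂ) :
    torusCoeff m n (fun u v => cexp (u * a + v * b - u * v)) = itoHermite m n a b := by
  let e (w : ℂ) (k : ℕ) : ℂ := w ^ k / k.factorial
  have e_summable (w : ℂ) : Summable fun k => ‖e w k‖ := summable_norm_pow_div_factorial w
  have e_hasSum (w : ℂ) : HasSum (e w) (cexp w) := hasSum_pow_div_factorial w
  have series (u v : ℂ) :
      HasSum (fun k : ℕ × ℕ × ℕ => e a k.1 * (e b k.2.1 * e (-1) k.2.2) *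
          (u ^ (k.1 + k.2.2) * v ^ (k.2.1 + k.2.2))) (cexp (u * a + v * b - u * v)) := by
    have h := hasSum_mul_mul_of_summable_norm (e_hasSum (u * a)) (e_hasSum (v * b))
      (e_hasSum (-(u * v))) (e_summable _) (e_summable _) (e_summable _)
    rw [← Complex.exp_add, ← Complex.exp_add, ← add_assoc, ← sub_eq_add_neg] at h
    refine h.congr_fun fun k => ?_
    simp only [e]
    rw [neg_pow (u * v)]
    ring
  have coeff_summable : Summable fun k : ℕ × ℕ × ℕ => ‖e a k.1 * (e b k.2.1 * e (-1) k.2.2)‖ := by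
    have h := (e_summable b).mul_norm (e_summable (-1))
    exact (e_summable a).mul_norm (g := fun k : ℕ × ℕ => e b k.1 * e (-1) k.2) h
  rw [torusCoeff_eq_tsum coeff_summable series, tsum_ite_add_eq_and_add_eq, itoHermite]
  refine Finset.sum_congr rfl fun p _ => ?_
  simp only [e]
  ring

end TorusCoeff

section StarProduct

variable {δ θ : ℝ}

lemma starInt_const_mul (a b : ℂ) (f g : ℝ × ℝ → ℂ) (t x : ℝ) :
    starInt θ δ (fun p => a * f p) (fun p => b * g p) t x = a * b * starInt θ δ f g t x := by
  simp only [starInt]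
  rw [mul_left_comm, ← integral_const_mul (a * b)]
  congr 2 with q
  ring

/-- The function `f` with the Gaussian regulator `exp (-δ(t² + x²))`. -/
noncomputable def gaussianDamp (δ : ℝ) (f : ℝ × ℝ → ℂ) (p : ℝ × ℝ) : ℂ :=
  Real.exp (-δ * (p.1 ^ 2 + p.2 ^ 2)) * f p

lemma gaussianDamp_integral {Z : Type*} [MeasurableSpace Z] {μ : Measure Z}
    (Φ : Z → ℝ × ℝ → ℂ) (p : ℝ × ℝ) :
    gaussianDamp δ (fun p => ∫ z, Φ z p ∂μ) p = ∫ z, gaussianDamp δ (Φ z) p ∂μ :=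
  (integral_const_mul _ _).symm

/-- The phase `(2/θ) ((t₁ - t)(x₂ - x) - (x₁ - x)(t₂ - t))` of the twisted convolution. -/
noncomputable def twistPhase (θ t x : ℝ) (q : (ℝ × ℝ) × (ℝ × ℝ)) : ℝ :=
  2 / θ * ((q.1.1 - t) * (q.2.2 - x) - (q.1.2 - x) * (q.2.1 - t))

lemma continuous_twistPhase (θ t x : ℝ) : Continuous (twistPhase θ t x) := by
  unfold twistPhase
  fun_prop

lemma starInt_eq_integral_gaussianDamp (f g : ℝ × ℝ → ℂ) (t x : ℝ) :
    starInt θ δ f g t x = (1 / (π ^ 2 * θ ^ 2) : ℝ) * ∫ q : (ℝ × ℝ) × (ℝ × ℝ),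
      cexp (twistPhase θ t x q * I) * (gaussianDamp δ f q.1 * gaussianDamp δ g q.2) := by
  simp only [starInt]
  congr 2 with q
  rw [add_assoc, mul_add, Real.exp_add]
  simp only [twistPhase, gaussianDamp]
  push_cast
  ring_nf

lemma starInt_integral {Z W : Type*} [MeasurableSpace Z] [MeasurableSpace W] {μ : Measure Z}
    {ν : Measure W} [SFinite μ] [SFinite ν] {Φ : Z → ℝ × ℝ → ℂ} {Ψ : W → ℝ × ℝ → ℂ}
    (hΦ : Integrable (fun y : (ℝ × ℝ) × Z => gaussianDamp δ (Φ y.2) y.1) (volume.prod μ))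
    (hΨ : Integrable (fun y : (ℝ × ℝ) × W => gaussianDamp δ (Ψ y.2) y.1) (volume.prod ν))
    (t x : ℝ) :
    starInt θ δ (fun p => ∫ z, Φ z p ∂μ) (fun p => ∫ w, Ψ w p ∂ν) t x =
      ∫ y, starInt θ δ (Φ y.1) (Ψ y.2) t x ∂μ.prod ν := by
  let F (q : (ℝ × ℝ) × (ℝ × ℝ)) (y : Z × W) : ℂ :=
    cexp (twistPhase θ t x q * I) * (gaussianDamp δ (Φ y.1) q.1 * gaussianDamp δ (Ψ y.2) q.2)
  have hF : Integrable (Function.uncurry F) (volume.prod (μ.prod ν)) := by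
    have hphase := continuous_twistPhase θ t x
    have hprod := integrable_mul_regroup hΦ hΨ
    exact Integrable.bdd_mul (c := 1) hprod
      (f := fun r : ((ℝ × ℝ) × (ℝ × ℝ)) × (Z × W) => cexp (twistPhase θ t x r.1 * I))
      (by fun_prop) (.of_forall fun r => (norm_exp_ofReal_mul_I _).le)
  have integral_F (q : (ℝ × ℝ) × (ℝ × ℝ)) :
      ∫ y, F q y ∂μ.prod ν = cexp (twistPhase θ t x q * I) *
        (gaussianDamp δ (fun p => ∫ z, Φ z p ∂μ) q.1 *
          gaussianDamp δ (fun p => ∫ w, Ψ w p ∂ν) q.2) := by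
    rw [gaussianDamp_integral, gaussianDamp_integral, integral_const_mul,
      integral_prod_mul (fun z => gaussianDamp δ (Φ z) q.1) (fun w => gaussianDamp δ (Ψ w) q.2)]
  simp_rw [starInt_eq_integral_gaussianDamp]
  rw [integral_const_mul, ← integral_integral_swap hF]
  simp_rw [integral_F]

/-- The exponential `exp (-ic(t² - x²) + Jt + Kx)` of an indefinite quadratic polynomial. -/
noncomputable def chirp (c : ℝ) (J K : ℂ) (p : ℝ × ℝ) : ℂ :=
  cexp (-(I * c * (p.1 ^ 2 - p.2 ^ 2)) + J * p.1 + K * p.2)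

lemma conj_chirp_neg (c : ℝ) (J K : ℂ) (p : ℝ × ℝ) :
    (starRingEnd ℂ) (chirp (-c) J K p) =
      chirp c ((starRingEnd ℂ) J) ((starRingEnd ℂ) K) p := by
  simp [chirp, ← Complex.exp_conj]

lemma norm_gaussianDamp_chirp_le (hδ : 0 < δ) (c : ℝ) (J K : ℂ) (p : ℝ × ℝ) :
    ‖gaussianDamp δ (chirp c J K) p‖ ≤
      Real.exp (-(δ / 2) * p.1 ^ 2) * Real.exp (-(δ / 2) * p.2 ^ 2) *
        Real.exp ((‖J‖ ^ 2 + ‖K‖ ^ 2) / (2 * δ)) := by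
  have re_mul_le (L : ℂ) (r : ℝ) : (L * r).re ≤ ‖L‖ ^ 2 / (2 * δ) + δ / 2 * r ^ 2 :=
    calc (L * r).re ≤ ‖L‖ * |r| := by simpa using re_le_norm (L * r)
      _ ≤ ‖L‖ ^ 2 / (2 * δ) + δ / 2 * |r| ^ 2 := by
        have h : 0 ≤ (‖L‖ - δ * |r|) ^ 2 / (2 * δ) := by positivity
        have h' : (‖L‖ - δ * |r|) ^ 2 / (2 * δ) =
            ‖L‖ ^ 2 / (2 * δ) + δ / 2 * |r| ^ 2 - ‖L‖ * |r| := by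
          field_simp
          ring
        linarith
      _ = _ := by rw [sq_abs]
  have re_chirp : (-(I * c * ((p.1 : ℂ) ^ 2 - p.2 ^ 2))).re = 0 := by
    rw [mul_assoc, ← ofReal_pow, ← ofReal_pow, ← ofReal_sub, ← ofReal_mul, neg_re, I_mul_re,
      ofReal_im, neg_zero, neg_zero]
  rw [gaussianDamp, chirp, norm_mul, norm_real, Real.norm_eq_abs, Real.abs_exp, Complex.norm_exp,
    ← Real.exp_add, ← Real.exp_add, ← Real.exp_add, Real.exp_le_exp, add_re, add_re, re_chirp,
    add_div]
  linarith [re_mul_le J p.1, re_mul_le K p.2]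

lemma integrable_gaussianDamp_chirp {Z : Type*} [TopologicalSpace Z] [CompactSpace Z]
    [SecondCountableTopology Z] [MeasurableSpace Z] [BorelSpace Z] {μ : Measure Z}
    [IsFiniteMeasure μ] {N J K : Z → ℂ} (hN : Continuous N) (hJ : Continuous J)
    (hK : Continuous K) (hδ : 0 < δ) (c : ℝ) :
    Integrable (fun y : (ℝ × ℝ) × Z =>
      gaussianDamp δ (fun p => N y.2 * chirp c (J y.2) (K y.2) p) y.1) (volume.prod μ) := by
  have gauss := integrable_exp_neg_mul_sq (half_pos hδ)
  have coeff : Integrable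
      (fun z => ‖N z‖ * Real.exp ((‖J z‖ ^ 2 + ‖K z‖ ^ 2) / (2 * δ))) μ :=
    Continuous.integrable_of_hasCompactSupport (by fun_prop) (.of_compactSpace _)
  refine ((gauss.mul_prod gauss).mul_prod coeff).mono'
    (Continuous.aestronglyMeasurable (by unfold gaussianDamp chirp; fun_prop))
    (.of_forall fun y => ?_)
  rw [gaussianDamp, mul_left_comm, norm_mul, mul_left_comm]
  exact mul_le_mul_of_nonneg_left (norm_gaussianDamp_chirp_le hδ c _ _ _) (norm_nonneg _)

/-- The closed form of the `δ`-regularized star product of two chirps. The two critical values come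
from the Gaussian integrals over the pairs `(t₁, x₂)` and `(x₁, t₂)` which the twist couples. -/
noncomputable def chirpStar (θ c δ : ℝ) (J₁ K₁ J₂ K₂ : ℂ) (t x : ℝ) : ℂ :=
  1 / (θ ^ 2 * (δ ^ 2 + c ^ 2) + 1) *
    cexp (quadraticCritValue (δ + I * c) (δ - I * c) (2 / θ)
        (J₁ - I * (2 / θ) * x) (K₂ - I * (2 / θ) * t) +
      quadraticCritValue (δ - I * c) (δ + I * c) (-(2 / θ))
        (K₁ + I * (2 / θ) * t) (J₂ + I * (2 / θ) * x))

lemma chirp_det (c d δ : ℝ) :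
    (δ + I * c) * (δ - I * c) + d ^ 2 / 4 = ((δ ^ 2 + c ^ 2 + d ^ 2 / 4 : ℝ) : ℂ) := by
  push_cast
  linear_combination (-(c : ℂ) ^ 2) * I_sq

lemma starInt_chirp (hθ : θ ≠ 0) (hδ : 0 < δ) (c : ℝ) (J₁ K₁ J₂ K₂ : ℂ) (t x : ℝ) :
    starInt θ δ (chirp c J₁ K₁) (chirp c J₂ K₂) t x = chirpStar θ c δ J₁ K₁ J₂ K₂ t x := by
  have hA : 0 < (δ + I * c : ℂ).re := by simpa
  have hB : 0 < (δ - I * c : ℂ).re := by simpa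
  have hdet : (π : ℂ) ^ 2 / ((δ + I * c) * (δ - I * c) + (2 / θ : ℝ) ^ 2 / 4) =
      (π ^ 2 * θ ^ 2 : ℝ) * (1 / (θ ^ 2 * (δ ^ 2 + c ^ 2) + 1)) := by
    rw [chirp_det]
    norm_cast
    field_simp
    ring
  have sqrt_mul_self (z : ℂ) : z ^ (1 / 2 : ℂ) * z ^ (1 / 2 : ℂ) = z := by
    rw [← sq, one_div]
    exact_mod_cast cpow_nat_inv_pow z two_ne_zero
  have twist (q : (ℝ × ℝ) × (ℝ × ℝ)) :
      cexp (twistPhase θ t x q * I) *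
          (gaussianDamp δ (chirp c J₁ K₁) q.1 * gaussianDamp δ (chirp c J₂ K₂) q.2) =
        planeGaussian (δ + I * c) (δ - I * c) (2 / θ)
            (J₁ - I * (2 / θ) * x) (K₂ - I * (2 / θ) * t) (q.1.1, q.2.2) *
          planeGaussian (δ - I * c) (δ + I * c) (-(2 / θ))
            (K₁ + I * (2 / θ) * t) (J₂ + I * (2 / θ) * x) (q.1.2, q.2.1) := by
    simp only [gaussianDamp, chirp, twistPhase, planeGaussian, ofReal_exp, ← Complex.exp_add]
    congr 1
    push_cast
    ring
  have hcancel : ((1 / (π ^ 2 * θ ^ 2) : ℝ) : ℂ) * (π ^ 2 * θ ^ 2 : ℝ) = 1 := by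
    rw [← ofReal_mul, one_div_mul_cancel (by positivity), ofReal_one]
  rw [starInt_eq_integral_gaussianDamp]
  simp_rw [twist]
  rw [Measure.volume_eq_prod (ℝ × ℝ), Measure.volume_eq_prod ℝ, integral_outer_mul_inner,
    ← Measure.volume_eq_prod, integral_planeGaussian hA hB, integral_planeGaussian hB hA,
    mul_comm (δ - I * c : ℂ), ofReal_neg, neg_sq, mul_mul_mul_comm, sqrt_mul_self, hdet,
    ← Complex.exp_add, ← mul_assoc, ← mul_assoc, hcancel, one_mul, chirpStar]

lemma continuous_chirpStar (hθ : θ ≠ 0) {X : Type*} [TopologicalSpace X] {δ : X → ℝ}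
    {J₁ K₁ J₂ K₂ : X → ℂ} (hδ : Continuous δ) (hJ₁ : Continuous J₁) (hK₁ : Continuous K₁)
    (hJ₂ : Continuous J₂) (hK₂ : Continuous K₂) (c t x : ℝ) :
    Continuous fun y => chirpStar θ c (δ y) (J₁ y) (K₁ y) (J₂ y) (K₂ y) t x := by
  have hscale (y : X) : (θ : ℂ) ^ 2 * (δ y ^ 2 + c ^ 2) + 1 ≠ 0 := by
    have : θ ^ 2 * (δ y ^ 2 + c ^ 2) + 1 ≠ 0 := by positivity
    exact_mod_cast this
  have hdet {d : ℝ} (hd : d ≠ 0) (y : X) :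
      (δ y + I * c) * (δ y - I * c) + (d : ℂ) ^ 2 / 4 ≠ 0 := by
    rw [chirp_det, ofReal_ne_zero]
    positivity
  have h2θ : 2 / θ ≠ 0 := div_ne_zero two_ne_zero hθ
  refine (continuous_const.div (by fun_prop) hscale).mul (Complex.continuous_exp.comp <|
    (continuous_quadraticCritValue (by fun_prop) (by fun_prop) (by fun_prop) (by fun_prop)
      (hdet h2θ)).add
    (continuous_quadraticCritValue (by fun_prop) (by fun_prop) (by fun_prop) (by fun_prop)
      fun y => ?_))
  rw [mul_comm (δ y - I * c : ℂ)]
  exact hdet (neg_ne_zero.2 h2θ) y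

end StarProduct

section MatrixBasis

variable {E s : ℝ}

/-- The square root `e^{siπ/4} √E` of `siE`. -/
noncomputable def signedRoot (E s : ℝ) : ℂ := cexp (s * I * π / 4) * (√E : ℝ)

lemma signedRoot_sq (hE : 0 ≤ E) (hs : s = 1 ∨ s = -1) : signedRoot E s ^ 2 = s * I * E := by
  rw [signedRoot, mul_pow, ← ofReal_pow, Real.sq_sqrt hE, ← Complex.exp_nat_mul]
  congr 1
  rcases hs with rfl | rfl
  · rw [show ((2 : ℕ) : ℂ) * (((1 : ℝ) : ℂ) * I * π / 4) = π / 2 * I by push_cast; ring,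
      exp_pi_div_two_mul_I]
    simp
  · rw [show ((2 : ℕ) : ℂ) * (((-1 : ℝ) : ℂ) * I * π / 4) = -π / 2 * I by push_cast; ring,
      exp_neg_pi_div_two_mul_I]
    simp

lemma conj_signedRoot_neg (E s : ℝ) : (starRingEnd ℂ) (signedRoot E (-s)) = signedRoot E s := by
  simp [signedRoot, ← Complex.exp_conj, map_ofNat]

lemma signedRoot_mul_signedRoot (hE : 0 ≤ E) (hs : s = 1 ∨ s = -1) (t x : ℂ) :
    signedRoot E s * (t - s * x) * (signedRoot E s * (t + s * x)) =
      s * I * E * (t ^ 2 - x ^ 2) := by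
  have s_sq : (s : ℂ) ^ 2 = 1 := by rcases hs with rfl | rfl <;> simp
  linear_combination (t ^ 2 - s ^ 2 * x ^ 2) * signedRoot_sq hE hs - s * I * E * x ^ 2 * s_sq

/-- The normalization constant `(E / 2π) √(m! n!)` of the matrix basis. -/
noncomputable def matrixNorm (E : ℝ) (m n : ℕ) : ℝ :=
  E / (2 * π) * √(m.factorial * n.factorial)

lemma matrixNorm_comm (E : ℝ) (m n : ℕ) : matrixNorm E m n = matrixNorm E n m := by
  rw [matrixNorm, matrixNorm, mul_comm (m.factorial : ℝ)]

lemma matrixNorm_mul_matrixNorm (E : ℝ) (n m l : ℕ) :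
    matrixNorm E n m * matrixNorm E m l = E / (2 * π) * m.factorial * matrixNorm E n l := by
  simp only [matrixNorm, Real.sqrt_mul (Nat.cast_nonneg _)]
  linear_combination (E / (2 * π)) ^ 2 * √n.factorial * √l.factorial *
    Real.mul_self_sqrt m.factorial.cast_nonneg

lemma Fge_eq_itoHermite (hE : 0 ≤ E) (hs : s = 1 ∨ s = -1) {m n : ℕ} (hmn : n ≤ m) (t x : ℝ) :
    Fge E s m n t x = matrixNorm E m n *
      (chirp (s * E / 2) 0 0 (t, x) *
        itoHermite m n (signedRoot E s * (t - s * x)) (signedRoot E s * (t + s * x))) := by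
  have hchirp : chirp (s * E / 2) 0 0 (t, x) = cexp (-s * I * E * (t ^ 2 - x ^ 2) / 2) := by
    rw [chirp]
    congr 1
    push_cast
    ring
  have hpow : (signedRoot E s) ^ (m - n) = (cexp (s * I * π / 4) * (√E : ℝ)) ^ (m - n) := rfl
  simp only [Fge, itoHermite, matrixNorm, ofReal_mul]
  rw [min_eq_right hmn, hchirp, ← hpow, mul_assoc, mul_assoc, mul_assoc, ← mul_assoc (_ ^ _),
    ← mul_pow, Finset.mul_sum]
  congr 2
  refine Finset.sum_congr rfl fun p hp => ?_
  have hp : p ≤ n := Nat.lt_succ_iff.1 (Finset.mem_range.1 hp)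
  rw [← signedRoot_mul_signedRoot hE hs, mul_pow _ _ (n - p),
    ← Nat.sub_add_sub_cancel hmn hp, pow_add]
  ring

lemma Fmn_eq_itoHermite (hE : 0 ≤ E) (hs : s = 1 ∨ s = -1) (m n : ℕ) (t x : ℝ) :
    Fmn E s m n t x = matrixNorm E m n *
      (chirp (s * E / 2) 0 0 (t, x) *
        itoHermite m n (signedRoot E s * (t - s * x)) (signedRoot E s * (t + s * x))) := by
  rw [Fmn]
  split_ifs with hmn
  · exact Fge_eq_itoHermite hE hs hmn t x
  have hs' : -s = 1 ∨ -s = -1 := by rcases hs with rfl | rfl <;> simp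
  rw [Fge_eq_itoHermite hE hs' (le_of_not_ge hmn), neg_mul, neg_div]
  simp only [map_mul, conj_ofReal, conj_itoHermite, conj_signedRoot_neg, conj_chirp_neg, map_sub,
    map_add, map_zero, ofReal_neg, neg_mul, sub_neg_eq_add, ← sub_eq_add_neg]
  rw [itoHermite_comm, matrixNorm_comm]

/-- The generating function of the matrix basis: up to normalization, `Fmn E s m n` is the
coefficient of `uᵐ vⁿ`. -/
noncomputable def matrixGen (E s : ℝ) (u v : ℂ) (p : ℝ × ℝ) : ℂ :=
  cexp (-(u * v)) *
    chirp (s * E / 2) (signedRoot E s * (u + v)) (signedRoot E s * s * (v - u)) p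

lemma matrixGen_eq (E s : ℝ) (u v : ℂ) (t x : ℝ) :
    matrixGen E s u v (t, x) = chirp (s * E / 2) 0 0 (t, x) *
      cexp (u * (signedRoot E s * (t - s * x)) + v * (signedRoot E s * (t + s * x)) - u * v) := by
  simp only [matrixGen, chirp, ← Complex.exp_add]
  congr 1
  ring

lemma Fmn_eq_torusCoeff (hE : 0 ≤ E) (hs : s = 1 ∨ s = -1) (m n : ℕ) (t x : ℝ) :
    Fmn E s m n t x = matrixNorm E m n *
      torusCoeff m n fun u v => matrixGen E s u v (t, x) := by
  simp_rw [Fmn_eq_itoHermite hE hs, matrixGen_eq, torusCoeff_const_mul, torusCoeff_exp_add_sub_mul]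

/-- The `δ`-regularized star product of two generating functions at `θ = 2 / E`, in closed form. -/
noncomputable def matrixGenStar (E s δ : ℝ) (u₁ v₁ u₂ v₂ : ℂ) (t x : ℝ) : ℂ :=
  cexp (-(u₁ * v₁)) * cexp (-(u₂ * v₂)) * chirpStar (2 / E) (s * E / 2) δ
    (signedRoot E s * (u₁ + v₁)) (signedRoot E s * s * (v₁ - u₁))
    (signedRoot E s * (u₂ + v₂)) (signedRoot E s * s * (v₂ - u₂)) t x

lemma starInt_matrixGen (hE : E ≠ 0) {δ : ℝ} (hδ : 0 < δ) (u₁ v₁ u₂ v₂ : ℂ) (t x : ℝ) :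
    starInt (2 / E) δ (matrixGen E s u₁ v₁) (matrixGen E s u₂ v₂) t x =
      matrixGenStar E s δ u₁ v₁ u₂ v₂ t x := by
  unfold matrixGen
  rw [starInt_const_mul, starInt_chirp (div_ne_zero two_ne_zero hE) hδ, matrixGenStar]

lemma selfDual_exponent_eq {e σ r : ℂ} (he : e ≠ 0) (hσ : σ ^ 2 = 1) (hr : r ^ 2 = σ * I * e)
    (u₁ v₁ u₂ v₂ t x : ℂ) :
    (I * (σ * e / 2) * ((r * σ * (v₂ - u₂) - I * e * t) ^ 2 - (r * (u₁ + v₁) - I * e * x) ^ 2) +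
          I * e * (r * (u₁ + v₁) - I * e * x) * (r * σ * (v₂ - u₂) - I * e * t)) / (2 * e ^ 2) -
        (I * (σ * e / 2) *
            ((r * (u₂ + v₂) + I * e * x) ^ 2 - (r * σ * (v₁ - u₁) + I * e * t) ^ 2) +
          I * e * (r * σ * (v₁ - u₁) + I * e * t) * (r * (u₂ + v₂) + I * e * x)) / (2 * e ^ 2) =
      -(I * (σ * e / 2) * (t ^ 2 - x ^ 2)) + r * (u₁ + v₂) * t + r * σ * (v₂ - u₁) * x +
        (u₁ * v₁ + u₂ * v₂ + v₁ * u₂ - u₁ * v₂) := by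
  have hI := I_sq
  rw [← sub_div, div_eq_iff (by simpa using he)]
  generalize I = i at hI hr ⊢
  clear he
  grind

lemma matrixGenStar_zero (hE : 0 < E) (hs : s = 1 ∨ s = -1) (u₁ v₁ u₂ v₂ : ℂ) (t x : ℝ) :
    matrixGenStar E s 0 u₁ v₁ u₂ v₂ t x =
      1 / 2 * (matrixGen E s u₁ v₂ (t, x) * cexp (v₁ * u₂)) := by
  have hE0 : (E : ℂ) ≠ 0 := ofReal_ne_zero.2 hE.ne'
  have s_sq : (s : ℂ) ^ 2 = 1 := by rcases hs with rfl | rfl <;> simp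
  have two_div : (2 : ℂ) / (2 / E : ℝ) = E := by
    rw [ofReal_div, ofReal_ofNat, div_div_cancel₀ two_ne_zero]
  have scale : ((2 / E : ℝ) : ℂ) ^ 2 * ((0 : ℝ) ^ 2 + (s * E / 2 : ℝ) ^ 2) + 1 = 2 := by
    push_cast
    rw [div_pow, div_pow, mul_pow, s_sq]
    field_simp
    ring
  have hA : (I * (s * E / 2 : ℝ)) ^ 2 = -((E : ℂ) ^ 2 / 4) := by
    push_cast
    linear_combination s ^ 2 * E ^ 2 / 4 * I_sq - E ^ 2 / 4 * s_sq
  rw [matrixGenStar, chirpStar, scale, div_div_cancel₀ two_ne_zero, ofReal_zero, zero_add, zero_sub,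
    quadraticCritValue_of_sq_eq rfl hA, quadraticCritValue_of_sq_eq (neg_neg _).symm
      (by rwa [neg_sq, ofReal_neg, neg_sq]), two_div, matrixGen, chirp, mul_left_comm]
  simp only [← Complex.exp_add]
  congr 2
  push_cast
  linear_combination
    selfDual_exponent_eq hE0 s_sq (signedRoot_sq hE.le hs) u₁ v₁ u₂ v₂ t x

lemma continuous_matrixGenStar (hE : E ≠ 0) (s : ℝ) {X : Type*} [TopologicalSpace X] {δ : X → ℝ}
    {u₁ v₁ u₂ v₂ : X → ℂ} (hδ : Continuous δ) (hu₁ : Continuous u₁) (hv₁ : Continuous v₁)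
    (hu₂ : Continuous u₂) (hv₂ : Continuous v₂) (t x : ℝ) :
    Continuous fun y => matrixGenStar E s (δ y) (u₁ y) (v₁ y) (u₂ y) (v₂ y) t x :=
  Continuous.mul (by fun_prop) (continuous_chirpStar (div_ne_zero two_ne_zero hE) hδ
    (by fun_prop) (by fun_prop) (by fun_prop) (by fun_prop) _ t x)

lemma integrable_gaussianDamp_matrixGen {δ : ℝ} (hδ : 0 < δ) (m n : ℕ) :
    Integrable (fun y : (ℝ × ℝ) × (𝕋 × 𝕋) => gaussianDamp δ (fun p => torusChar m n y.2 *
      matrixGen E s (fourier 1 y.2.1) (fourier 1 y.2.2) p) y.1) (volume.prod volume) := by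
  have hchar := continuous_torusChar m n
  have h := integrable_gaussianDamp_chirp (μ := (volume : Measure (𝕋 × 𝕋)))
    (N := fun z => torusChar m n z * cexp (-(fourier 1 z.1 * fourier 1 z.2)))
    (J := fun z => signedRoot E s * (fourier 1 z.1 + fourier 1 z.2))
    (K := fun z => signedRoot E s * s * (fourier 1 z.2 - fourier 1 z.1))
    (by fun_prop) (by fun_prop) (by fun_prop) hδ (s * E / 2)
  simpa only [matrixGen, mul_assoc] using h

lemma starInt_torusCoeff_matrixGen (hE : E ≠ 0) {δ : ℝ} (hδ : 0 < δ) (n m k l : ℕ) (t x : ℝ) :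
    starInt (2 / E) δ (fun p => torusCoeff n m fun u v => matrixGen E s u v p)
        (fun p => torusCoeff k l fun u v => matrixGen E s u v p) t x =
      ∫ y : (𝕋 × 𝕋) × (𝕋 × 𝕋), torusChar n m y.1 * torusChar k l y.2 *
        matrixGenStar E s δ (fourier 1 y.1.1) (fourier 1 y.1.2) (fourier 1 y.2.1)
          (fourier 1 y.2.2) t x := by
  let Φ (m n : ℕ) (z : 𝕋 × 𝕋) (p : ℝ × ℝ) : ℂ :=
    torusChar m n z * matrixGen E s (fourier 1 z.1) (fourier 1 z.2) p
  refine (starInt_integral (Φ := Φ n m) (Ψ := Φ k l) (integrable_gaussianDamp_matrixGen hδ n m)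
    (integrable_gaussianDamp_matrixGen hδ k l) t x).trans ?_
  simp only [Φ, starInt_const_mul, starInt_matrixGen hE hδ]
  rfl

lemma torusChar_mul_torusChar (n m k l : ℕ) (y : (𝕋 × 𝕋) × (𝕋 × 𝕋)) :
    torusChar n m y.1 * torusChar k l y.2 =
      torusChar n l (y.1.1, y.2.2) * torusChar m k (y.1.2, y.2.1) := by
  simp only [torusChar]
  ring

lemma tendsto_starInt_torusCoeff_matrixGen (hE : 0 < E) (hs : s = 1 ∨ s = -1) (n m k l : ℕ)
    (t x : ℝ) :
    Tendsto (fun δ => starInt (2 / E) δ (fun p => torusCoeff n m fun u v => matrixGen E s u v p)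
        (fun p => torusCoeff k l fun u v => matrixGen E s u v p) t x) (𝓝[>] 0)
      (𝓝 (1 / 2 * ((torusCoeff n l fun u v => matrixGen E s u v (t, x)) *
        if m = k then (m.factorial : ℂ)⁻¹ else 0))) := by
  let Φ (δ : ℝ) (y : (𝕋 × 𝕋) × (𝕋 × 𝕋)) : ℂ := torusChar n m y.1 * torusChar k l y.2 *
    matrixGenStar E s δ (fourier 1 y.1.1) (fourier 1 y.1.2) (fourier 1 y.2.1) (fourier 1 y.2.2) t x
  have hΦ : Continuous (Function.uncurry Φ) := by
    have h₁ := continuous_torusChar n m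
    have h₂ := continuous_torusChar k l
    exact Continuous.mul (by fun_prop) (continuous_matrixGenStar hE.ne' s (by fun_prop)
      (by fun_prop) (by fun_prop) (by fun_prop) (by fun_prop) t x)
  have hlim : Tendsto (fun δ => ∫ y, Φ δ y) (𝓝[>] 0) (𝓝 (∫ y, Φ 0 y)) := by
    have h := continuous_parametric_integral_of_continuous (μ := volume) hΦ isCompact_univ
    rw [Measure.restrict_univ] at h
    exact h.continuousAt.mono_left nhdsWithin_le_nhds
  have hΦ_zero : ∫ y, Φ 0 y = 1 / 2 * ((torusCoeff n l fun u v => matrixGen E s u v (t, x)) *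
      if m = k then (m.factorial : ℂ)⁻¹ else 0) := by
    have factor (y : (𝕋 × 𝕋) × (𝕋 × 𝕋)) : Φ 0 y = 1 / 2 *
        ((torusChar n l (y.1.1, y.2.2) *
            matrixGen E s (fourier 1 y.1.1) (fourier 1 y.2.2) (t, x)) *
          (torusChar m k (y.1.2, y.2.1) * cexp (fourier 1 y.1.2 * fourier 1 y.2.1))) := by
      simp only [Φ]
      rw [matrixGenStar_zero hE hs, torusChar_mul_torusChar]
      ring
    simp_rw [factor]
    rw [integral_const_mul, Measure.volume_eq_prod (𝕋 × 𝕋), Measure.volume_eq_prod 𝕋,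
      integral_outer_mul_inner volume volume volume volume
        (fun z : 𝕋 × 𝕋 =>
          torusChar n l z * matrixGen E s (fourier 1 z.1) (fourier 1 z.2) (t, x))
        (fun z : 𝕋 × 𝕋 => torusChar m k z * cexp (fourier 1 z.1 * fourier 1 z.2)),
      ← torusCoeff_exp_mul]
    rfl
  rw [← hΦ_zero]
  refine hlim.congr' ?_
  filter_upwards [self_mem_nhdsWithin] with δ hδ
  exact (starInt_torusCoeff_matrixGen hE.ne' hδ n m k l t x).symm

end MatrixBasis

/-- matrix-unit (projector) relations at the self-dual point
`θ = 2/E`: the regularized star products exist pointwise and satisfy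
`F^s_{n,m} ⋆_θ F^s_{k,l} = (E/4π) δ_{mk} F^s_{n,l}`. -/
theorem Fmn_star_projector (E : ℝ) (hE : 0 < E) (n m k l : ℕ) (s : ℝ)
    (hs : s = 1 ∨ s = -1) (t x : ℝ) :
    Filter.Tendsto
      (fun δ : ℝ => starInt (2 / E) δ
        (fun p => Fmn E s n m p.1 p.2) (fun p => Fmn E s k l p.1 p.2) t x)
      (nhdsWithin (0 : ℝ) (Set.Ioi 0))
      (nhds (((E / (4 * Real.pi) : ℝ) : ℂ) * (if m = k then 1 else 0) * Fmn E s n l t x)) := by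
  have hF (i j : ℕ) := funext fun p : ℝ × ℝ => Fmn_eq_torusCoeff hE.le hs i j p.1 p.2
  rw [hF n m, hF k l]
  simp_rw [starInt_const_mul]
  convert (tendsto_starInt_torusCoeff_matrixGen hE hs n m k l t x).const_mul _ using 2
  rw [Fmn_eq_torusCoeff hE.le hs]
  split_ifs with hmk
  · subst hmk
    have hm : (m.factorial : ℂ) ≠ 0 := Nat.cast_ne_zero.2 m.factorial_ne_zero
    rw [← ofReal_mul (matrixNorm E n m), matrixNorm_mul_matrixNorm]
    push_cast
    field_simp
    ring
  · simp
end
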